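/- arXiv:2409.13487 — 3 statements merged into one kernel-verified Lean document; each statement's English description precedes it below -/
import Mathlib

section
/- If an R-module F is a direct summand of an R-module G fitting into a short exact sequence 0 → R^(α) → G → R_S^(β) → 0 for some cardinals α and β, then the projective dimension of F is at most the projective dimension of R_S. -/
/-!
A direct sum of exact sequences is exact and a direct sum of projectives is projective, so by
dimension shifting a direct sum has projective dimension at most `n` as soon as all its summands do.
The bound then passes from the ends of a short exact sequence to its middle term, and from there to
direct summands.

Projective dimension is measured by Mathlib's `CategoryTheory.Abelian.Ext`, whereas `extVanish`
uses the derived functors `Ext R C n`. Over a projective resolution of the first argument, the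
vanishing of either in degree `n + 1` says that every cocycle is a coboundary.
-/

open CategoryTheory

universe u

variable (R : Type u) [CommRing R]

/-- `Ext^n_R(M, N) = 0`. -/
def extVanish (n : ℕ) (M N : Type u) [AddCommGroup M] [Module R M]
    [AddCommGroup N] [Module R N] : Prop :=
  Subsingleton (((Ext R (ModuleCat.{u} R) n).obj
    (Opposite.op (ModuleCat.of R M))).obj (ModuleCat.of R N))

/-- `C` is `S`-weakly cotorsion if `Ext^1_R(R_S, C) = 0`. -/
def IsWeaklyCotorsion (S : Submonoid R) (C : Type u) [AddCommGroup C] [Module R C] : Prop :=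
  extVanish R 1 (Localization S) C

/-- `F` is `S`-strongly flat if `Ext^1_R(F, C) = 0` for all `S`-weakly cotorsion `C`. -/
def IsStronglyFlat (S : Submonoid R) (F : Type u) [AddCommGroup F] [Module R F] : Prop :=
  ∀ (C : Type u) [AddCommGroup C] [Module R C], IsWeaklyCotorsion R S C → extVanish R 1 F C

section ExtVanishing

variable {k : Type*} [Ring k] {C : Type*} [Category* C] [Abelian C]

lemma subsingleton_Ext_succ_iff_of_resolution [Linear k C] [EnoughProjectives C]
    {X : C} (P : ProjectiveResolution X) (Y : C) (n : ℕ) :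
    Subsingleton (((Ext k C (n + 1)).obj (Opposite.op X)).obj Y) ↔
      ∀ f : P.complex.X (n + 1) ⟶ Y, P.complex.d (n + 2) (n + 1) ≫ f = 0 →
        ∃ g : P.complex.X n ⟶ Y, P.complex.d (n + 1) n ≫ g = f := by
  rw [(P.isoExt (R := k) (n + 1) Y).toLinearEquiv.toEquiv.subsingleton_congr,
    ← ModuleCat.isZero_iff_subsingleton, ← HomologicalComplex.exactAt_iff_isZero_homology,
    HomologicalComplex.exactAt_iff' _ n (n + 1) (n + 2) (by simp) (by simp),
    ShortComplex.moduleCat_exact_iff]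
  exact Iff.rfl

lemma subsingleton_abelianExt_succ_iff_of_resolution [HasExt C]
    {X : C} (P : ProjectiveResolution X) (Y : C) (n : ℕ) :
    Subsingleton (Abelian.Ext X Y (n + 1)) ↔
      ∀ f : P.complex.X (n + 1) ⟶ Y, P.complex.d (n + 2) (n + 1) ≫ f = 0 →
        ∃ g : P.complex.X n ⟶ Y, P.complex.d (n + 1) n ≫ g = f := by
  rw [subsingleton_iff_forall_eq 0]
  constructor
  · intro h f hf
    exact (P.extMk_eq_zero_iff f (n + 2) rfl hf n rfl).1 (h _)
  · intro h e
    obtain ⟨f, hf, rfl⟩ := P.extMk_surjective e (n + 2) rfl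
    exact (P.extMk_eq_zero_iff f (n + 2) rfl hf n rfl).2 (h f hf)

variable (k) in
lemma subsingleton_Ext_succ_iff_abelianExt [Linear k C] [EnoughProjectives C] [HasExt C]
    (X Y : C) (n : ℕ) :
    Subsingleton (((Ext k C (n + 1)).obj (Opposite.op X)).obj Y) ↔
      Subsingleton (Abelian.Ext X Y (n + 1)) :=
  (subsingleton_Ext_succ_iff_of_resolution (projectiveResolution X) Y n).trans
    (subsingleton_abelianExt_succ_iff_of_resolution (projectiveResolution X) Y n).symm

variable (k) in
lemma hasProjectiveDimensionLE_iff_subsingleton_Ext_succ [Linear k C] [EnoughProjectives C]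
    [EnoughInjectives C] (X : C) (n : ℕ) :
    HasProjectiveDimensionLE X n ↔
      ∀ Y : C, Subsingleton (((Ext k C (n + 1)).obj (Opposite.op X)).obj Y) := by
  let := HasExt.standard C
  simp only [subsingleton_Ext_succ_iff_abelianExt]
  exact ⟨fun _ ↦ HasProjectiveDimensionLT.subsingleton X (n + 1) (n + 1) le_rfl,
    hasProjectiveDimensionLT_of_enoughInjectives X (n + 1)⟩

end ExtVanishing

section Coproducts

open Limits

lemma shortExact_sigmaMap {C : Type*} [Category* C] [Abelian C] {ι : Type*}
    [HasColimitsOfShape (Discrete ι) C] [HasExactColimitsOfShape (Discrete ι) C]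
    {S : ι → ShortComplex C} (hS : ∀ i, (S i).ShortExact) :
    (ShortComplex.mk (Limits.Sigma.map fun i ↦ (S i).f) (Limits.Sigma.map fun i ↦ (S i).g)
      (by ext; simp)).ShortExact := by
  have (i : ι) := (hS i).mono_f
  have (i : ι) := (hS i).epi_g
  refine .mk' (ShortComplex.exact_of_g_is_cokernel _ <|
    CokernelCofork.IsColimit.ofπ' _ _ fun φ hφ ↦ ?_) inferInstance inferInstance
  have hφ_app (i : ι) : (S i).f ≫ Sigma.ι (fun i ↦ (S i).X₂) i ≫ φ = 0 := by
    simpa using Sigma.ι (fun i ↦ (S i).X₁) i ≫= hφ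
  exact ⟨Sigma.desc fun i ↦ (hS i).exact.desc _ (hφ_app i), by ext; simp⟩

lemma hasProjectiveDimensionLE_sigmaObj {C : Type*} [Category.{u} C] [Abelian C]
    [EnoughProjectives C] {ι : Type u} [HasColimitsOfShape (Discrete ι) C]
    [HasExactColimitsOfShape (Discrete ι) C] {X : ι → C} {n : ℕ}
    (hX : ∀ i, HasProjectiveDimensionLE (X i) n) : HasProjectiveDimensionLE (∐ X) n := by
  induction n generalizing X with
  | zero =>
    simp only [← projective_iff_hasProjectiveDimensionLE_zero] at hX ⊢
    infer_instance
  | succ n ih =>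
    let S (i : ι) : ShortComplex C := .mk _ (Projective.π (X i)) (kernel.condition _)
    have hS (i : ι) : (S i).ShortExact := { exact := ShortComplex.exact_kernel _ }
    have hP (i : ι) : Projective (S i).X₂ := Projective.projective_over (X i)
    have hK (i : ι) : HasProjectiveDimensionLE (S i).X₁ n :=
      ((hS i).hasProjectiveDimensionLT_X₃_iff n (hP i)).1 (hX i)
    have hP_sigma : Projective (∐ fun i ↦ (S i).X₂) := inferInstance
    exact ((shortExact_sigmaMap hS).hasProjectiveDimensionLT_X₃_iff n hP_sigma).2 (ih hK)

end Coproducts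

section Modules

variable {R}

lemma hasProjectiveDimensionLE_finsupp (ι : Type u) {M : Type u} [AddCommGroup M] [Module R M]
    {n : ℕ} (hM : HasProjectiveDimensionLE (ModuleCat.of R M) n) :
    HasProjectiveDimensionLE (ModuleCat.of R (ι →₀ M)) n := by
  classical
  let e : ∐ (fun _ : ι ↦ ModuleCat.of R M) ≅ ModuleCat.of R (ι →₀ M) :=
    ModuleCat.coprodIsoDirectSum _ ≪≫ (finsuppLEquivDirectSum R M ι).symm.toModuleIso
  have := hasProjectiveDimensionLE_sigmaObj fun _ : ι ↦ hM
  exact hasProjectiveDimensionLT_of_iso e (n + 1)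

lemma forall_extVanish_succ_iff {M : Type u} [AddCommGroup M] [Module R M] {n : ℕ} :
    (∀ (N : Type u) [AddCommGroup N] [Module R N], extVanish R (n + 1) M N) ↔
      HasProjectiveDimensionLE (ModuleCat.of R M) n := by
  rw [hasProjectiveDimensionLE_iff_subsingleton_Ext_succ R]
  exact ⟨fun h Y ↦ h Y, fun h N _ _ ↦ h (ModuleCat.of R N)⟩

lemma extVanish_succ_of_projective (P N : Type u) [AddCommGroup P] [Module R P]
    [AddCommGroup N] [Module R N] [Module.Projective R P] (n : ℕ) : extVanish R (n + 1) P N :=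
  ModuleCat.isZero_iff_subsingleton.1 (isZero_Ext_succ_of_projective _ _ n)

end Modules

theorem pd_le_of_summand_general {A M F G : Type u}
    [AddCommGroup A] [Module R A] [AddCommGroup M] [Module R M]
    [AddCommGroup F] [Module R F] [AddCommGroup G] [Module R G]
    {β : Type u} {f : A →ₗ[R] G} {g : G →ₗ[R] (β →₀ M)}
    (hf : Function.Injective f) (hg : Function.Surjective g) (hfg : Function.Exact f g)
    {i : F →ₗ[R] G} {p : G →ₗ[R] F} (hip : p.comp i = LinearMap.id) {n : ℕ}
    (hA : ∀ (N : Type u) [AddCommGroup N] [Module R N], extVanish R (n + 1) A N)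
    (hM : ∀ (N : Type u) [AddCommGroup N] [Module R N], extVanish R (n + 1) M N) :
    ∀ (N : Type u) [AddCommGroup N] [Module R N], extVanish R (n + 1) F N := by
  rw [forall_extVanish_succ_iff] at hA hM ⊢
  have hS : (ModuleCat.shortComplexOfCompEqZero f g hfg.linearMap_comp_eq_zero).ShortExact :=
    ModuleCat.shortComplex_shortExact _ hfg hf hg
  have hG : HasProjectiveDimensionLE (ModuleCat.of R G) n :=
    hS.hasProjectiveDimensionLT_X₂ (n + 1) hA (hasProjectiveDimensionLE_finsupp β hM)
  let summand : Retract (ModuleCat.of R F) (ModuleCat.of R G) :=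
    { i := ModuleCat.ofHom i
      r := ModuleCat.ofHom p
      retract := ModuleCat.hom_ext hip }
  exact summand.hasProjectiveDimensionLT (n + 1)

/-- If `F` is a direct summand of a module `G` fitting in a short exact sequence
`0 → R^(α) → G → R_S^(β) → 0`, then `pd_R F ≤ pd_R R_S`. -/
theorem pd_le_of_summand (S : Submonoid R) (F G : Type u)
    [AddCommGroup F] [Module R F] [AddCommGroup G] [Module R G]
    (α β : Type u)
    (f : (α →₀ R) →ₗ[R] G) (g : G →ₗ[R] (β →₀ Localization S))
    (hf : Function.Injective f) (hg : Function.Surjective g) (hfg : Function.Exact f g)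
    (i : F →ₗ[R] G) (p : G →ₗ[R] F) (hip : p.comp i = LinearMap.id) :
    ∀ n : ℕ,
      (∀ (N : Type u) [AddCommGroup N] [Module R N], extVanish R (n + 1) (Localization S) N) →
      (∀ (N : Type u) [AddCommGroup N] [Module R N], extVanish R (n + 1) F N) := by
  intro n hS
  exact pd_le_of_summand_general R hf hg hfg hip
    (fun N _ _ ↦ extVanish_succ_of_projective (α →₀ R) N n) hS
end

section
/- If the projective dimension of R_S as an R-module is at most 1, then the class of S-strongly flat R-modules is resolving, i.e., it contains the projectives and is closed under extensions and kernels of epimorphisms between S-strongly flat modules. -/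
open CategoryTheory

universe u

variable (R : Type u) [CommRing R]

/-!
Let `F` be a module in `⊥(M^⊥)`, where `⊥` denotes `Ext¹`-orthogonality and `pd M ≤ 1`. Embedding a
module `D` in an injective module with quotient `Q` gives `Ext¹(-, Q) = Ext²(-, D)`. So `Q` lies in
`M^⊥`, hence `Ext²(F, D) = Ext¹(F, Q) = 0`, i.e. `pd F ≤ 1`. Given `0 → A → B → F → 0`, the
vanishing of `Ext²(F, -)` makes `Ext¹(B, -) → Ext¹(A, -)` surjective, so `A` lies in `⊥(M^⊥)` if `B`
does.
-/

universe w v₁ u₁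

/-- Resolving classes of objects: they contain the projective objects and are closed under
extensions and under kernels of epimorphisms. An epimorphism with its kernel is encoded as a short
exact complex. -/
structure IsResolving {C : Type u₁} [Category.{v₁} C] [Limits.HasZeroMorphisms C]
    (P : ObjectProperty C) : Prop where
  prop_of_projective (X : C) [Projective X] : P X
  isClosedUnderExtensions : P.IsClosedUnderExtensions
  prop_X₁_of_shortExact {T : ShortComplex C} (hT : T.ShortExact) (h₂ : P T.X₂) (h₃ : P T.X₃) :
    P T.X₁

section Abelian

variable {C : Type u₁} [Category.{v₁} C] [Abelian C] [HasExt.{w} C]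

/-- The class `P^⊥` of objects `Y` with `Ext¹(X, Y) = 0` for all `X` in `P`. It generalizes weakly
cotorsion modules. -/
def extOneRightOrthogonal (P : ObjectProperty C) : ObjectProperty C :=
  fun Y ↦ ∀ X, P X → Subsingleton (Abelian.Ext.{w} X Y 1)

/-- The class `⊥Q` of objects `X` with `Ext¹(X, Y) = 0` for all `Y` in `Q`. It generalizes strongly
flat modules. -/
def extOneLeftOrthogonal (Q : ObjectProperty C) : ObjectProperty C :=
  fun X ↦ ∀ Y, Q Y → Subsingleton (Abelian.Ext.{w} X Y 1)

lemma subsingleton_ext_X₂_of_shortExact {T : ShortComplex C} (hT : T.ShortExact) {Y : C} {n : ℕ}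
    (h₁ : Subsingleton (Abelian.Ext.{w} T.X₁ Y n)) (h₃ : Subsingleton (Abelian.Ext.{w} T.X₃ Y n)) :
    Subsingleton (Abelian.Ext.{w} T.X₂ Y n) := by
  refine subsingleton_of_forall_eq 0 fun x ↦ ?_
  obtain ⟨y, rfl⟩ := Abelian.Ext.contravariant_sequence_exact₂ hT Y x (Subsingleton.elim _ _)
  rw [Subsingleton.elim y 0, Abelian.Ext.comp_zero]

lemma subsingleton_ext_X₁_of_shortExact {T : ShortComplex C} (hT : T.ShortExact) {Y : C} {n : ℕ}
    (h₂ : Subsingleton (Abelian.Ext.{w} T.X₂ Y n))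
    (h₃ : Subsingleton (Abelian.Ext.{w} T.X₃ Y (n + 1))) :
    Subsingleton (Abelian.Ext.{w} T.X₁ Y n) := by
  refine subsingleton_of_forall_eq 0 fun x ↦ ?_
  obtain ⟨y, rfl⟩ := Abelian.Ext.contravariant_sequence_exact₁ hT Y x (add_comm 1 n)
    (Subsingleton.elim _ _)
  rw [Subsingleton.elim y 0, Abelian.Ext.comp_zero]

lemma subsingleton_ext_X₃_iff_of_injective {T : ShortComplex C} (hT : T.ShortExact)
    [Injective T.X₂] (X : C) (n : ℕ) :
    Subsingleton (Abelian.Ext.{w} X T.X₃ (n + 1)) ↔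
      Subsingleton (Abelian.Ext.{w} X T.X₁ (n + 2)) := by
  constructor <;> refine fun _ ↦ subsingleton_of_forall_eq 0 fun x ↦ ?_
  · obtain ⟨y, rfl⟩ := Abelian.Ext.covariant_sequence_exact₁ X hT x
      (Abelian.Ext.eq_zero_of_injective _) rfl
    rw [Subsingleton.elim y 0, Abelian.Ext.zero_comp]
  · obtain ⟨y, rfl⟩ := Abelian.Ext.covariant_sequence_exact₃ X hT x rfl (Subsingleton.elim _ _)
    rw [Abelian.Ext.eq_zero_of_injective y, Abelian.Ext.zero_comp]

/-- The witness is an `n`-th cosyzygy of `Y`. -/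
lemma exists_subsingleton_ext_one_iff [EnoughInjectives C] (Y : C) (n : ℕ) :
    ∃ Y' : C, ∀ X : C,
      Subsingleton (Abelian.Ext.{w} X Y' 1) ↔ Subsingleton (Abelian.Ext.{w} X Y (n + 1)) := by
  induction n generalizing Y with
  | zero => exact ⟨Y, fun _ ↦ Iff.rfl⟩
  | succ n ih =>
    let ⟨I⟩ := EnoughInjectives.presentation Y
    have hT : (ShortComplex.mk _ _ (Limits.cokernel.condition I.f)).ShortExact :=
      { exact := ShortComplex.exact_cokernel I.f }
    obtain ⟨Y', hY'⟩ := ih (Limits.cokernel I.f)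
    exact ⟨Y', fun X ↦ (hY' X).trans (subsingleton_ext_X₃_iff_of_injective hT X n)⟩

lemma hasProjectiveDimensionLE_of_extOneLeftOrthogonal [EnoughInjectives C]
    {P : ObjectProperty C} {n : ℕ} (hP : ∀ X, P X → HasProjectiveDimensionLE X n) {F : C}
    (hF : extOneLeftOrthogonal.{w} (extOneRightOrthogonal.{w} P) F) :
    HasProjectiveDimensionLE F n := by
  refine hasProjectiveDimensionLT_of_enoughInjectives.{w} F (n + 1) fun D ↦ ?_
  obtain ⟨Q, hQ⟩ := exists_subsingleton_ext_one_iff.{w} D n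
  have hQP : extOneRightOrthogonal.{w} P Q := fun X hX ↦
    have := hP X hX
    (hQ X).2 (HasProjectiveDimensionLT.subsingleton X (n + 1) (n + 1) le_rfl D)
  exact (hQ F).1 (hF Q hQP)

lemma isResolving_extOneLeftOrthogonal {Q : ObjectProperty C}
    (hQ : ∀ X, extOneLeftOrthogonal.{w} Q X → HasProjectiveDimensionLE X 1) :
    IsResolving (extOneLeftOrthogonal.{w} Q) where
  prop_of_projective X _ := fun Y _ ↦ HasProjectiveDimensionLT.subsingleton X 1 1 le_rfl Y
  isClosedUnderExtensions :=
    ⟨fun hT h₁ h₃ Y hY ↦ subsingleton_ext_X₂_of_shortExact hT (h₁ Y hY) (h₃ Y hY)⟩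
  prop_X₁_of_shortExact {T} hT h₂ h₃ := fun Y hY ↦
    have := hQ T.X₃ h₃
    subsingleton_ext_X₁_of_shortExact hT (h₂ Y hY)
      (HasProjectiveDimensionLT.subsingleton T.X₃ 2 2 le_rfl Y)

theorem stronglyFlat_resolving_of_pd_le_one_general [EnoughInjectives C] (P : ObjectProperty C)
    (hP : ∀ X, P X → HasProjectiveDimensionLE X 1) :
    IsResolving (extOneLeftOrthogonal.{w} (extOneRightOrthogonal.{w} P)) :=
  isResolving_extOneLeftOrthogonal fun _ ↦ hasProjectiveDimensionLE_of_extOneLeftOrthogonal hP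

lemma subsingleton_ext_succ_iff_of_projectiveResolution {X : C} (P : ProjectiveResolution X)
    (Y : C) (n : ℕ) :
    Subsingleton (Abelian.Ext.{w} X Y (n + 1)) ↔
      ∀ f : P.complex.X (n + 1) ⟶ Y, P.complex.d (n + 2) (n + 1) ≫ f = 0 →
        ∃ g : P.complex.X n ⟶ Y, P.complex.d (n + 1) n ≫ g = f := by
  refine ⟨fun _ f hf ↦ ?_, fun hP ↦ subsingleton_of_forall_eq 0 fun x ↦ ?_⟩
  · exact (P.extMk_eq_zero_iff f (n + 2) rfl hf n rfl).1 (Subsingleton.elim _ _)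
  · obtain ⟨f, hf, rfl⟩ := P.extMk_surjective x (n + 2) rfl
    exact (P.extMk_eq_zero_iff f (n + 2) rfl hf n rfl).2 (hP f hf)

/-- `Ext A C` is a left derived functor, computed from projective resolutions; `Abelian.Ext`, which
has the long exact sequences, consists of morphisms in the derived category. -/
lemma subsingleton_leftDerivedExt_succ_iff (A : Type*) [Ring A] [Linear A C] [EnoughProjectives C]
    (X Y : C) (n : ℕ) :
    Subsingleton (((Ext A C (n + 1)).obj (Opposite.op X)).obj Y) ↔
      Subsingleton (Abelian.Ext.{w} X Y (n + 1)) := by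
  let P := ProjectiveResolution.of X
  rw [subsingleton_ext_succ_iff_of_projectiveResolution P, ← ModuleCat.isZero_iff_subsingleton,
    (P.isoExt (R := A) (n + 1) Y).isZero_iff, ← HomologicalComplex.exactAt_iff_isZero_homology,
    HomologicalComplex.exactAt_iff' _ n (n + 1) (n + 2) (by simp) (by simp),
    ShortComplex.moduleCat_exact_iff]
  exact Iff.rfl

end Abelian

section ModuleCat

variable {A : Type u₁} [Ring A]

lemma isResolving_moduleCat_iff [Small.{v₁} A] (P : ObjectProperty (ModuleCat.{v₁} A)) :
    IsResolving P ↔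
      (∀ (M : Type v₁) [AddCommGroup M] [Module A M],
        Module.Projective A M → P (ModuleCat.of A M)) ∧
      (∀ (K M N : Type v₁) [AddCommGroup K] [Module A K] [AddCommGroup M] [Module A M]
        [AddCommGroup N] [Module A N] (f : K →ₗ[A] M) (g : M →ₗ[A] N),
        Function.Injective f → Function.Surjective g → Function.Exact f g →
        P (ModuleCat.of A K) → P (ModuleCat.of A N) → P (ModuleCat.of A M)) ∧
      (∀ (K M N : Type v₁) [AddCommGroup K] [Module A K] [AddCommGroup M] [Module A M]
        [AddCommGroup N] [Module A N] (f : K →ₗ[A] M) (g : M →ₗ[A] N),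
        Function.Injective f → Function.Surjective g → Function.Exact f g →
        P (ModuleCat.of A M) → P (ModuleCat.of A N) → P (ModuleCat.of A K)) := by
  constructor
  · intro hP
    refine ⟨fun M _ _ hM ↦ ?_, fun K M N _ _ _ _ _ _ f g hf hg hfg ↦ ?_,
      fun K M N _ _ _ _ _ _ f g hf hg hfg ↦ ?_⟩
    · have := (IsProjective.iff_projective M).1 hM
      exact hP.prop_of_projective _
    · let T := ModuleCat.shortComplexOfCompEqZero f g hfg.linearMap_comp_eq_zero
      exact hP.isClosedUnderExtensions.prop_X₂_of_shortExact
        (ModuleCat.shortComplex_shortExact T hfg hf hg)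
    · let T := ModuleCat.shortComplexOfCompEqZero f g hfg.linearMap_comp_eq_zero
      exact hP.prop_X₁_of_shortExact (ModuleCat.shortComplex_shortExact T hfg hf hg)
  · rintro ⟨projective, extension, kernel⟩
    have exact_hom {T : ShortComplex (ModuleCat.{v₁} A)} (hT : T.ShortExact) :
        Function.Exact T.f.hom T.g.hom :=
      (ShortComplex.ShortExact.moduleCat_exact_iff_function_exact T).1 hT.exact
    exact
      { prop_of_projective := fun X hX ↦ projective X ((IsProjective.iff_projective X).2 hX)
        isClosedUnderExtensions := ⟨fun {T} hT ↦ extension _ _ _ T.f.hom T.g.hom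
          hT.moduleCat_injective_f hT.moduleCat_surjective_g (exact_hom hT)⟩
        prop_X₁_of_shortExact := fun {T} hT ↦ kernel _ _ _ T.f.hom T.g.hom
          hT.moduleCat_injective_f hT.moduleCat_surjective_g (exact_hom hT) }

end ModuleCat

lemma extVanish_succ_iff (n : ℕ) (M N : Type u) [AddCommGroup M] [Module R M] [AddCommGroup N]
    [Module R N] :
    extVanish R (n + 1) M N ↔
      Subsingleton (Abelian.Ext.{u} (ModuleCat.of R M) (ModuleCat.of R N) (n + 1)) :=
  subsingleton_leftDerivedExt_succ_iff R _ _ n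

lemma hasProjectiveDimensionLE_iff_extVanish (n : ℕ) (M : Type u) [AddCommGroup M] [Module R M] :
    HasProjectiveDimensionLE (ModuleCat.of R M) n ↔
      ∀ (N : Type u) [AddCommGroup N] [Module R N], extVanish R (n + 1) M N := by
  simp only [extVanish_succ_iff]
  exact ⟨fun _ N _ _ ↦ HasProjectiveDimensionLT.subsingleton _ (n + 1) (n + 1) le_rfl _,
    fun hM ↦ hasProjectiveDimensionLT_of_enoughInjectives.{u} _ _ fun N ↦ hM N⟩

lemma isStronglyFlat_iff (S : Submonoid R) (F : Type u) [AddCommGroup F] [Module R F] :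
    IsStronglyFlat R S F ↔
      extOneLeftOrthogonal.{u} (extOneRightOrthogonal.{u}
        (.singleton (ModuleCat.of R (Localization S)))) (ModuleCat.of R F) := by
  simp only [IsStronglyFlat, IsWeaklyCotorsion, extVanish_succ_iff R 0, extOneLeftOrthogonal,
    extOneRightOrthogonal, ObjectProperty.singleton_iff, forall_eq']
  exact ⟨fun hF Y ↦ hF Y, fun hF C ↦ hF (ModuleCat.of R C)⟩

/-- If `pd_R R_S ≤ 1` then the class of `S`-strongly flat modules is resolving:
it contains the projectives and is closed under extensions and kernels of
epimorphisms between `S`-strongly flat modules. -/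
theorem stronglyFlat_resolving_of_pd_le_one (S : Submonoid R)
    (h : ∀ (N : Type u) [AddCommGroup N] [Module R N], extVanish R 2 (Localization S) N) :
    (∀ (P : Type u) [AddCommGroup P] [Module R P],
        Module.Projective R P → IsStronglyFlat R S P) ∧
    (∀ (A B C : Type u) [AddCommGroup A] [Module R A] [AddCommGroup B] [Module R B]
        [AddCommGroup C] [Module R C] (f : A →ₗ[R] B) (g : B →ₗ[R] C),
        Function.Injective f → Function.Surjective g → Function.Exact f g →
        IsStronglyFlat R S A → IsStronglyFlat R S C → IsStronglyFlat R S B) ∧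
    (∀ (A B C : Type u) [AddCommGroup A] [Module R A] [AddCommGroup B] [Module R B]
        [AddCommGroup C] [Module R C] (f : A →ₗ[R] B) (g : B →ₗ[R] C),
        Function.Injective f → Function.Surjective g → Function.Exact f g →
        IsStronglyFlat R S B → IsStronglyFlat R S C → IsStronglyFlat R S A) := by
  simp only [isStronglyFlat_iff]
  refine (isResolving_moduleCat_iff _).1 (stronglyFlat_resolving_of_pd_le_one_general _ ?_)
  rintro _ ⟨⟩
  exact (hasProjectiveDimensionLE_iff_extVanish R 1 (Localization S)).2 h
end

section
/- Suppose the first syzygy of R_S is S-strongly flat. Given a short exact sequence 0 → A → B → C → 0 of R-modules, S-sfd(C) ≤ max{S-sfd(B), S-sfd(A) + 1}. -/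
open CategoryTheory

universe u

variable (R : Type u) [CommRing R]

/-- The `S`-strongly flat dimension of `M`: the smallest `n` with
`Ext^{n+1}_R(M, C) = 0` for every `S`-weakly cotorsion `C`, or `∞` otherwise. -/
noncomputable def sfdim (S : Submonoid R) (M : Type u) [AddCommGroup M] [Module R M] : ℕ∞ :=
  sInf {n : ℕ∞ | ∃ m : ℕ, n = m ∧
    ∀ (C : Type u) [AddCommGroup C] [Module R C],
      IsWeaklyCotorsion R S C → extVanish R (m + 1) M C}

/-!
An `S`-strongly flat first syzygy of `R_S` forces `Ext²(R_S, D) = 0` for every `S`-weakly cotorsion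
`D`, so the cokernel of `D` in an injective module is again weakly cotorsion. Shifting dimensions
along it shows that vanishing of `Ext^n(M, -)` on weakly cotorsion modules passes from `n` to
`n + 1`. Hence `S-sfd(M) ≤ n` is the vanishing of `Ext^{n+1}(M, -)` alone, and the long exact
sequence `Ext^{n+1}(A, D) → Ext^{n+2}(C, D) → Ext^{n+2}(B, D)` gives the bound.
-/

section AbelianCategory

universe w v

variable {𝒜 : Type u} [Category.{v} 𝒜] [Abelian 𝒜]

/- Mathlib's `Ext K 𝒜` is a left derived functor of `Hom(-, Y)`, while the long exact sequences are
available for `Abelian.Ext`, which is defined in the derived category. A projective resolution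
presents both as cocycles modulo coboundaries. -/
lemma subsingleton_ext_iff_subsingleton_abelianExt (K : Type*) [Ring K] [Linear K 𝒜]
    [EnoughProjectives 𝒜] [HasExt.{w} 𝒜] (X Y : 𝒜) (n : ℕ) :
    Subsingleton (((Ext K 𝒜 (n + 1)).obj (Opposite.op X)).obj Y) ↔
      Subsingleton (Abelian.Ext X Y (n + 1)) := by
  let P : ProjectiveResolution X := projectiveResolution X
  have ext_iff : Subsingleton (((Ext K 𝒜 (n + 1)).obj (Opposite.op X)).obj Y) ↔
      ∀ φ : P.complex.X (n + 1) ⟶ Y, P.complex.d (n + 2) (n + 1) ≫ φ = 0 →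
        ∃ ψ : P.complex.X n ⟶ Y, P.complex.d (n + 1) n ≫ ψ = φ := by
    rw [← ModuleCat.isZero_iff_subsingleton, (P.isoExt (n + 1) Y).isZero_iff,
      ← HomologicalComplex.exactAt_iff_isZero_homology,
      HomologicalComplex.exactAt_iff' _ n (n + 1) (n + 2) (by simp) (by simp),
      ShortComplex.moduleCat_exact_iff]
    rfl
  rw [ext_iff]
  constructor
  · intro exact_cocycles
    refine subsingleton_of_forall_eq 0 fun x => ?_
    obtain ⟨φ, hφ, rfl⟩ := P.extMk_surjective x (n + 2) rfl
    exact (P.extMk_eq_zero_iff φ (n + 2) rfl hφ n rfl).mpr (exact_cocycles φ hφ)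
  · intro _ φ hφ
    exact (P.extMk_eq_zero_iff φ (n + 2) rfl hφ n rfl).mp (Subsingleton.elim _ _)

variable [HasExt.{w} 𝒜] {T : ShortComplex 𝒜}

lemma subsingleton_abelianExt_X₃_left (hT : T.ShortExact) (Y : 𝒜) {n : ℕ}
    (h₁ : Subsingleton (Abelian.Ext T.X₁ Y n)) (h₂ : Subsingleton (Abelian.Ext T.X₂ Y (n + 1))) :
    Subsingleton (Abelian.Ext T.X₃ Y (n + 1)) := by
  refine subsingleton_of_forall_eq 0 fun x => ?_
  obtain ⟨y, rfl⟩ := Abelian.Ext.contravariant_sequence_exact₃ hT Y x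
    (Subsingleton.elim _ _) (add_comm 1 n)
  rw [Subsingleton.elim y 0, Abelian.Ext.comp_zero]

lemma subsingleton_abelianExt_X₁_right (hT : T.ShortExact) (X : 𝒜) {n : ℕ}
    (h₃ : Subsingleton (Abelian.Ext X T.X₃ n)) (h₂ : Subsingleton (Abelian.Ext X T.X₂ (n + 1))) :
    Subsingleton (Abelian.Ext X T.X₁ (n + 1)) := by
  refine subsingleton_of_forall_eq 0 fun x => ?_
  obtain ⟨y, rfl⟩ := Abelian.Ext.covariant_sequence_exact₁ X hT x (Subsingleton.elim _ _) rfl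
  rw [Subsingleton.elim y 0, Abelian.Ext.zero_comp]

lemma subsingleton_abelianExt_X₃_right (hT : T.ShortExact) (X : 𝒜) {n : ℕ}
    (h₂ : Subsingleton (Abelian.Ext X T.X₂ n)) (h₁ : Subsingleton (Abelian.Ext X T.X₁ (n + 1))) :
    Subsingleton (Abelian.Ext X T.X₃ n) := by
  refine subsingleton_of_forall_eq 0 fun x => ?_
  obtain ⟨y, rfl⟩ := Abelian.Ext.covariant_sequence_exact₃ X hT x rfl (Subsingleton.elim _ _)
  rw [Subsingleton.elim y 0, Abelian.Ext.zero_comp]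

lemma exists_subsingleton_abelianExt_dimension_shift [EnoughInjectives 𝒜] (Y : 𝒜) :
    ∃ Z : 𝒜, ∀ (X : 𝒜) (n : ℕ),
      Subsingleton (Abelian.Ext X Z (n + 1)) ↔ Subsingleton (Abelian.Ext X Y (n + 2)) := by
  obtain ⟨I⟩ := EnoughInjectives.presentation Y
  have hT : (ShortComplex.mk _ _ (Limits.cokernel.condition I.f)).ShortExact :=
    { exact := ShortComplex.exact_cokernel I.f }
  have ext_injective (X : 𝒜) (n : ℕ) : Subsingleton (Abelian.Ext X I.J (n + 1)) :=
    Abelian.Ext.subsingleton_of_injective X I.J n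
  exact ⟨_, fun X n =>
    ⟨fun h => subsingleton_abelianExt_X₁_right hT X h (ext_injective X (n + 1)),
      subsingleton_abelianExt_X₃_right hT X (ext_injective X n)⟩⟩

end AbelianCategory

section Modules

variable {R}

lemma extVanish_succ_iff_subsingleton_abelianExt {n : ℕ} {M N : Type u}
    [AddCommGroup M] [Module R M] [AddCommGroup N] [Module R N] :
    extVanish R (n + 1) M N ↔
      Subsingleton (Abelian.Ext (ModuleCat.of R M) (ModuleCat.of R N) (n + 1)) :=
  subsingleton_ext_iff_subsingleton_abelianExt R _ _ n

lemma exists_extVanish_dimension_shift (N : Type u) [AddCommGroup N] [Module R N] :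
    ∃ Z : ModuleCat.{u} R, ∀ (M : Type u) [AddCommGroup M] [Module R M] (n : ℕ),
      extVanish R (n + 1) M Z ↔ extVanish R (n + 2) M N := by
  obtain ⟨Z, hZ⟩ := exists_subsingleton_abelianExt_dimension_shift (ModuleCat.of R N)
  refine ⟨Z, fun M _ _ n => ?_⟩
  simpa only [extVanish_succ_iff_subsingleton_abelianExt] using hZ (ModuleCat.of R M) n

variable {A B C : Type u} [AddCommGroup A] [Module R A] [AddCommGroup B] [Module R B]
  [AddCommGroup C] [Module R C] {f : A →ₗ[R] B} {g : B →ₗ[R] C}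

lemma extVanish_of_shortExact (hf : Function.Injective f) (hg : Function.Surjective g)
    (hfg : Function.Exact f g) {D : Type u} [AddCommGroup D] [Module R D] {n : ℕ}
    (hA : extVanish R (n + 1) A D) (hB : extVanish R (n + 2) B D) : extVanish R (n + 2) C D := by
  rw [extVanish_succ_iff_subsingleton_abelianExt] at hA hB ⊢
  let T := ShortComplex.moduleCatMk f g hfg.linearMap_comp_eq_zero
  have hT : T.ShortExact := ModuleCat.shortComplex_shortExact T hfg hf hg
  exact subsingleton_abelianExt_X₃_left hT _ hA hB

/-- `Ext^n_R(M, D) = 0` for every `S`-weakly cotorsion `D`. For `n = 1` this is `S`-strong flatness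
of `M`, and `sfdim R S M` is the least `m` for which it holds with `n = m + 1`. -/
def ExtVanishOnWeaklyCotorsion (S : Submonoid R) (n : ℕ) (M : Type u)
    [AddCommGroup M] [Module R M] : Prop :=
  ∀ (D : Type u) [AddCommGroup D] [Module R D], IsWeaklyCotorsion R S D → extVanish R n M D

namespace ExtVanishOnWeaklyCotorsion

variable {S : Submonoid R} {M : Type u} [AddCommGroup M] [Module R M] {m n : ℕ}

lemma of_shortExact (hf : Function.Injective f) (hg : Function.Surjective g)
    (hfg : Function.Exact f g) (hA : ExtVanishOnWeaklyCotorsion S (n + 1) A)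
    (hB : ExtVanishOnWeaklyCotorsion S (n + 2) B) : ExtVanishOnWeaklyCotorsion S (n + 2) C :=
  fun D _ _ hD => extVanish_of_shortExact hf hg hfg (hA D hD) (hB D hD)

lemma succ (hS : ExtVanishOnWeaklyCotorsion S 2 (Localization S))
    (hM : ExtVanishOnWeaklyCotorsion S (n + 1) M) : ExtVanishOnWeaklyCotorsion S (n + 2) M := by
  intro D _ _ hD
  obtain ⟨Z, hZ⟩ := exists_extVanish_dimension_shift (R := R) D
  have weaklyCotorsion_Z : IsWeaklyCotorsion R S Z := (hZ (Localization S) 0).mpr (hS D hD)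
  exact (hZ M n).mp (hM Z weaklyCotorsion_Z)

lemma mono (hS : ExtVanishOnWeaklyCotorsion S 2 (Localization S)) (hmn : m ≤ n)
    (hM : ExtVanishOnWeaklyCotorsion S (m + 1) M) : ExtVanishOnWeaklyCotorsion S (n + 1) M := by
  induction n, hmn using Nat.le_induction with
  | base => exact hM
  | succ _ _ ih => exact succ hS ih

end ExtVanishOnWeaklyCotorsion

lemma sfdim_le_natCast_iff {S : Submonoid R}
    (hS : ExtVanishOnWeaklyCotorsion S 2 (Localization S)) {M : Type u} [AddCommGroup M]
    [Module R M] {n : ℕ} : sfdim R S M ≤ n ↔ ExtVanishOnWeaklyCotorsion S (n + 1) M := by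
  constructor
  · intro hn
    obtain ⟨_, ⟨m, rfl, hm⟩, hmn⟩ := sInf_lt_iff.mp (ENat.lt_natCast_add_one_iff.mpr hn)
    exact .mono hS (Nat.cast_le.mp (ENat.lt_natCast_add_one_iff.mp hmn)) hm
  · exact fun hM => sInf_le ⟨n, rfl, hM⟩

end Modules

/-- If the first syzygy of `R_S` is `S`-strongly flat, then for a short exact
sequence `0 → A → B → C → 0` one has `S-sfd(C) ≤ max{S-sfd(B), S-sfd(A) + 1}`. -/
theorem sfdim_right_le_max (S : Submonoid R) (H P : Type u)
    [AddCommGroup H] [Module R H] [AddCommGroup P] [Module R P]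
    (i : H →ₗ[R] P) (p : P →ₗ[R] Localization S)
    (hi : Function.Injective i) (hp : Function.Surjective p) (hip : Function.Exact i p)
    (hP : Module.Projective R P) (hH : IsStronglyFlat R S H)
    (A B C : Type u) [AddCommGroup A] [Module R A] [AddCommGroup B] [Module R B]
    [AddCommGroup C] [Module R C] (f : A →ₗ[R] B) (g : B →ₗ[R] C)
    (hf : Function.Injective f) (hg : Function.Surjective g) (hfg : Function.Exact f g) :
    sfdim R S C ≤ max (sfdim R S B) (sfdim R S A + 1) := by
  have hS : ExtVanishOnWeaklyCotorsion S 2 (Localization S) :=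
    .of_shortExact hi hp hip hH fun D _ _ _ => extVanish_succ_of_projective P D 1
  refine le_of_forall_ge fun d hd => ?_
  obtain ⟨hB, hA⟩ := max_le_iff.mp hd
  induction d with
  | top => exact le_top
  | coe d =>
    obtain _ | n := d
    · simp at hA
    have hA : sfdim R S A ≤ n := by simpa using hA
    rw [sfdim_le_natCast_iff hS] at hA hB ⊢
    exact .of_shortExact hf hg hfg hA hB
end
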